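/- arXiv:1810.08121 — 5 statements merged into one kernel-verified Lean document; each statement's English description precedes it below -/
import Mathlib

section
/- Let A and B be 2×2 matrices with entries in R, with tensor components a_κ = Tr(σ_κ A) and b_κ = Tr(σ_κ B). Then for each k ∈ {1,2,3}, the k-th spin-vector component of the commutator satisfies Tr(σ_k [A,B]) = (1/2)( [a₀, b_k] + [a_k, b₀] + i ε_{k k₁ k₂} {a_{k₁}, b_{k₂}} ); in particular the torque term carrying one Levi-Civita symbol turns the commutator of matrices into an anticommutator of components. -/
/-!
A trace of a product splits into tensor components without commutativity,
`Tr(X Y) = (1/2) ∑_κ Tr(σ_κ X) Tr(σ_κ Y)`, because the Pauli entries are central. Taking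
`X = σ_k A`, `Y = B` and contracting `σ_κ σ_k` by the Pauli product rule gives
`Tr(σ_k A B) = (1/2) (a₀ b_k + a_k b₀ + i ε_{k l m} a_l b_m)`. In the commutator, exchanging
`A` and `B` flips the sign of the Levi-Civita symbol, which turns the difference of products
into a sum.
-/

open Matrix Kronecker

/-- The Pauli matrices `σ₀ = I₂, σ₁, σ₂, σ₃`, with complex entries regarded as
elements of an associative unital `ℂ`-algebra `R` via the algebra map. -/
noncomputable def pauli (R : Type*) [Ring R] [Algebra ℂ R] : Fin 4 → Matrix (Fin 2) (Fin 2) R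
  | 0 => !![1, 0; 0, 1]
  | 1 => !![0, 1; 1, 0]
  | 2 => !![0, -(algebraMap ℂ R Complex.I); algebraMap ℂ R Complex.I, 0]
  | 3 => !![1, 0; 0, -1]

/-- The Levi-Civita symbol `ε_{ijk}` on indices in `{1,2,3}` (represented by `Fin 3`). -/
def eps (i j k : Fin 3) : ℤ :=
  ((j.val : ℤ) - i.val) * ((k.val : ℤ) - i.val) * ((k.val : ℤ) - j.val) / 2

theorem eps_rotate (i j k : Fin 3) : eps i j k = eps j k i := by
  decide +revert

theorem eps_swap_right (i j k : Fin 3) : eps i j k = -eps i k j := by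
  decide +revert

theorem sum_eps_smul_swap {M : Type*} [AddCommGroup M] (k : Fin 3) (f : Fin 3 → Fin 3 → M) :
    ∑ l : Fin 3, ∑ m : Fin 3, eps k l m • f m l =
      -∑ l : Fin 3, ∑ m : Fin 3, eps k l m • f l m := by
  rw [Finset.sum_comm]
  simp only [← Finset.sum_neg_distrib, ← neg_smul, ← eps_swap_right]

section PauliCalculus

variable {R : Type*} [Ring R] [Algebra ℂ R]

theorem pauli_zero : pauli R 0 = 1 :=
  one_fin_two.symm

theorem pauli_succ_mul_pauli_succ (i j : Fin 3) :
    pauli R i.succ * pauli R j.succ =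
      (if i = j then 1 else 0) + Complex.I • ∑ m : Fin 3, eps i j m • pauli R m.succ := by
  fin_cases i <;> fin_cases j <;> ext r c <;> fin_cases r <;> fin_cases c <;>
    simp [pauli, eps, Fin.sum_univ_three, ← map_mul, Algebra.smul_def (A := R)]

theorem trace_pauli_zero_mul (M : Matrix (Fin 2) (Fin 2) R) :
    (pauli R 0 * M).trace = M 0 0 + M 1 1 := by
  rw [pauli_zero, one_mul, trace_fin_two]

theorem trace_pauli_one_mul (M : Matrix (Fin 2) (Fin 2) R) :
    (pauli R 1 * M).trace = M 1 0 + M 0 1 := by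
  rw [trace_fin_two, mul_apply, mul_apply]
  simp [pauli, Fin.sum_univ_two]

theorem trace_pauli_two_mul (M : Matrix (Fin 2) (Fin 2) R) :
    (pauli R 2 * M).trace = Complex.I • (M 0 1 - M 1 0) := by
  rw [trace_fin_two, mul_apply, mul_apply]
  simp [pauli, Fin.sum_univ_two, Algebra.smul_def, mul_sub, neg_add_eq_sub]

theorem trace_pauli_three_mul (M : Matrix (Fin 2) (Fin 2) R) :
    (pauli R 3 * M).trace = M 0 0 - M 1 1 := by
  rw [trace_fin_two, mul_apply, mul_apply]
  simp [pauli, Fin.sum_univ_two, sub_eq_add_neg]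

theorem trace_mul_eq_sum_pauli (X Y : Matrix (Fin 2) (Fin 2) R) :
    (X * Y).trace =
      (1 / 2 : ℂ) • ∑ κ : Fin 4, (pauli R κ * X).trace * (pauli R κ * Y).trace := by
  rw [Fin.sum_univ_four]
  simp only [trace_pauli_zero_mul, trace_pauli_one_mul, trace_pauli_two_mul, trace_pauli_three_mul]
  simp only [smul_mul_smul_comm, Complex.I_mul_I, trace_fin_two, mul_apply, Fin.sum_univ_two,
    add_mul, mul_add, sub_mul, mul_sub]
  module

theorem trace_pauli_succ_mul_pauli_succ_mul (i j : Fin 3) (A : Matrix (Fin 2) (Fin 2) R) :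
    (pauli R i.succ * (pauli R j.succ * A)).trace =
      (if i = j then (pauli R 0 * A).trace else 0) +
        Complex.I • ∑ m : Fin 3, eps i j m • (pauli R m.succ * A).trace := by
  rw [← mul_assoc, pauli_succ_mul_pauli_succ, add_mul, trace_add, ite_mul, zero_mul, ← pauli_zero,
    apply_ite trace, trace_zero, smul_mul_assoc, trace_smul, Finset.sum_mul, trace_sum]
  simp only [smul_mul_assoc, trace_smul]

theorem trace_pauli_succ_mul_mul (k : Fin 3) (A B : Matrix (Fin 2) (Fin 2) R) :
    (pauli R k.succ * (A * B)).trace =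
      (1 / 2 : ℂ) •
        ((pauli R 0 * A).trace * (pauli R k.succ * B).trace +
          (pauli R k.succ * A).trace * (pauli R 0 * B).trace +
          Complex.I • ∑ l : Fin 3, ∑ m : Fin 3,
            eps k l m • ((pauli R l.succ * A).trace * (pauli R m.succ * B).trace)) := by
  have contraction :
      ∑ i : Fin 3, (pauli R i.succ * (pauli R k.succ * A)).trace * (pauli R i.succ * B).trace =
        (pauli R 0 * A).trace * (pauli R k.succ * B).trace +
          Complex.I • ∑ l : Fin 3, ∑ m : Fin 3,
            eps k l m • ((pauli R l.succ * A).trace * (pauli R m.succ * B).trace) := by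
    simp only [trace_pauli_succ_mul_pauli_succ_mul, add_mul, ite_mul, zero_mul, smul_mul_assoc,
      Finset.sum_mul, Finset.sum_add_distrib, Finset.sum_ite_eq', Finset.mem_univ, if_true,
      ← Finset.smul_sum]
    rw [Finset.sum_comm]
    simp only [eps_rotate _ k]
  rw [← mul_assoc, trace_mul_eq_sum_pauli, Fin.sum_univ_succ, contraction, pauli_zero, one_mul,
    ← add_assoc, add_comm ((pauli R k.succ * A).trace * _)]

end PauliCalculus

/-- Spin-vector component of the commutator of two 2×2 matrices over a `ℂ`-algebra:
`Tr(σ_k [A,B]) = (1/2)([a₀,b_k] + [a_k,b₀] + i ε_{k k₁ k₂} {a_{k₁}, b_{k₂}})`;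
the torque term with one Levi-Civita symbol is an anticommutator of components. -/
theorem spinor_commutator_vector (R : Type*) [Ring R] [Algebra ℂ R]
    (A B : Matrix (Fin 2) (Fin 2) R) (a b : Fin 4 → R)
    (ha : ∀ κ : Fin 4, a κ = (pauli R κ * A).trace)
    (hb : ∀ κ : Fin 4, b κ = (pauli R κ * B).trace) :
    ∀ k : Fin 3,
      (pauli R k.succ * (A * B - B * A)).trace =
        (1/2 : ℂ) •
          ((a 0 * b k.succ - b k.succ * a 0) + (a k.succ * b 0 - b 0 * a k.succ)
            + algebraMap ℂ R Complex.I *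
                ∑ k₁ : Fin 3, ∑ k₂ : Fin 3,
                  ((eps k k₁ k₂ : ℤ) : R) *
                    (a k₁.succ * b k₂.succ + b k₂.succ * a k₁.succ)) := by
  intro k
  have torque_swap := sum_eps_smul_swap k fun l m ↦ b m.succ * a l.succ
  simp only [mul_sub, trace_sub, trace_pauli_succ_mul_mul, ← ha, ← hb, ← Algebra.smul_def,
    ← zsmul_eq_mul, torque_swap, smul_add, Finset.sum_add_distrib]
  module
end

section
/- Let A and B be 2×2 matrices with entries in R, with tensor components a_κ = Tr(σ_κ A) and b_κ = Tr(σ_κ B). Then the scalar component of the commutator satisfies Tr([A,B]) = (1/2)( [a₀, b₀] + Σ_{k=1}^{3} [a_k, b_k] ). -/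
open Matrix Kronecker

/-!
The Pauli matrices satisfy the completeness relation `∑ κ, (σ_κ)ᵢⱼ (σ_κ)ₖₗ = 2 δᵢₗ δⱼₖ`. Their
entries are scalars, hence central in `R`, so contracting the relation with `Aⱼᵢ Bₗₖ` gives
`∑ κ, a_κ b_κ = 2 Tr(A B)` without ever exchanging entries of `A` and `B`. Antisymmetrising in `A`
and `B` gives the trace of the commutator.
-/

/-- The completeness (Fierz) relation `∑ κ, (σ κ)ᵢⱼ (σ κ)ₖₗ = c δᵢₗ δⱼₖ` of a family of square
matrices. It says that `A ↦ ∑ κ, Tr(σ κ A) σ κ` is multiplication by `c`, and serves to recover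
`c Tr(A B)` from the components `Tr(σ κ A)` and `Tr(σ κ B)`. -/
def FierzRelation {S ι n : Type*} [CommSemiring S] [Fintype ι] [DecidableEq n]
    (σ : ι → Matrix n n S) (c : S) : Prop :=
  ∀ i j k l, ∑ κ, σ κ i j * σ κ k l = if i = l ∧ j = k then c else 0

theorem trace_map_algebraMap_mul {S R m n : Type*} [CommSemiring S] [Semiring R] [Algebra S R]
    [Fintype m] [Fintype n] (M : Matrix m n S) (A : Matrix n m R) :
    (M.map (algebraMap S R) * A).trace = ∑ i, ∑ j, M i j • A j i := by
  simp only [Matrix.trace, diag_apply, mul_apply, map_apply, Algebra.smul_def]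

theorem FierzRelation.sum_trace_mul_trace {S R ι n : Type*} [Fintype ι] [Fintype n]
    [DecidableEq n] [CommSemiring S] [Semiring R] [Algebra S R]
    {σ : ι → Matrix n n S} {c : S} (hσ : FierzRelation σ c) (A B : Matrix n n R) :
    ∑ κ, ((σ κ).map (algebraMap S R) * A).trace * ((σ κ).map (algebraMap S R) * B).trace =
      c • (A * B).trace := by
  calc
    _ = ∑ κ, ∑ i, ∑ k, ∑ j, ∑ l, (σ κ i j * σ κ k l) • (A j i * B l k) := by
      simp only [trace_map_algebraMap_mul, Finset.sum_mul_sum, smul_mul_smul_comm]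
    _ = ∑ i, ∑ k, ∑ j, ∑ l, (∑ κ, σ κ i j * σ κ k l) • (A j i * B l k) := by
      simp only [Finset.sum_smul, Finset.sum_comm (γ := ι)]
    _ = ∑ i, ∑ j, c • (A j i * B i j) := by
      simp [hσ _ _ _ _, ite_and, ite_smul]
    _ = c • (A * B).trace := by
      rw [Finset.sum_comm]
      simp only [Matrix.trace, diag_apply, mul_apply, Finset.smul_sum]

theorem spinor_commutator_scalar_general {S R ι n : Type*} [Fintype ι] [Fintype n] [DecidableEq n]
    [CommSemiring S] [Ring R] [Algebra S R] {σ : ι → Matrix n n S} {c : S}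
    (hσ : FierzRelation σ c) (A B : Matrix n n R) (a b : ι → R)
    (ha : ∀ κ, a κ = ((σ κ).map (algebraMap S R) * A).trace)
    (hb : ∀ κ, b κ = ((σ κ).map (algebraMap S R) * B).trace) :
    c • (A * B - B * A).trace = ∑ κ, (a κ * b κ - b κ * a κ) := by
  simp only [ha, hb, Finset.sum_sub_distrib, hσ.sum_trace_mul_trace, Matrix.trace_sub, smul_sub]

theorem map_algebraMap_pauli (R : Type*) [Ring R] [Algebra ℂ R] (κ : Fin 4) :
    (pauli ℂ κ).map (algebraMap ℂ R) = pauli R κ := by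
  ext i j
  fin_cases κ <;> fin_cases i <;> fin_cases j <;> simp [pauli]

theorem fierzRelation_pauli : FierzRelation (pauli ℂ) 2 := by
  intro i j k l
  fin_cases i <;> fin_cases j <;> fin_cases k <;> fin_cases l <;>
    simp [pauli, Fin.sum_univ_four, one_add_one_eq_two]

/-- Scalar component of the commutator of two 2×2 matrices over a `ℂ`-algebra:
`Tr([A,B]) = (1/2)([a₀,b₀] + Σ_k [a_k,b_k])`. -/
theorem spinor_commutator_scalar (R : Type*) [Ring R] [Algebra ℂ R]
    (A B : Matrix (Fin 2) (Fin 2) R) (a b : Fin 4 → R)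
    (ha : ∀ κ : Fin 4, a κ = (pauli R κ * A).trace)
    (hb : ∀ κ : Fin 4, b κ = (pauli R κ * B).trace) :
    (A * B - B * A).trace =
      (1/2 : ℂ) •
        ((a 0 * b 0 - b 0 * a 0)
          + ∑ k : Fin 3, (a k.succ * b k.succ - b k.succ * a k.succ)) := by
  simp only [← map_algebraMap_pauli R] at ha hb
  rw [one_div, eq_inv_smul_iff₀ two_ne_zero, ← Fin.sum_univ_succ fun κ ↦ a κ * b κ - b κ * a κ]
  exact spinor_commutator_scalar_general fierzRelation_pauli A B a b ha hb
end

section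
/- Let A and B be 4×4 matrices with entries in R, with two-spin tensor components a_{κ,λ} and b_{κ,λ}. Then for all k,m ∈ {1,2,3}, the entangled dyadic component of the product satisfies Tr((σ_k ⊗ σ_m) AB) = (1/4)[ a_{0,0} b_{k,m} + a_{k,m} b_{0,0} + a_{k,0} b_{0,m} + a_{0,m} b_{k,0} + i ε_{k k₁ k₂}( a_{k₁,0} b_{k₂,m} + a_{k₁,m} b_{k₂,0} ) + i ε_{m m₁ m₂}( a_{0,m₁} b_{k,m₂} + a_{k,m₁} b_{0,m₂} ) − ε_{k k₁ k₂} ε_{m m₁ m₂} a_{k₁,m₁} b_{k₂,m₂} ]. -/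
open Matrix Kronecker

/-!
The product rule for a single spin,
`Tr(σ_k M N) = ½ (m₀ n_k + m_k n₀ + i (m × n)_k)`,
holds over any unital `ℂ`-algebra, commutative or not. A two-spin matrix over `R` is a one-spin
matrix over the algebra of `2 × 2` matrices over `R`, so the rule applies to the first spin, and
then to the second spin in each resulting product of partial traces. Multiplying the two rules
gives the factor `1/4`, and `i² = -1` is the sign of the term with two cross products.
-/

/-- The single-spin component `M ↦ Tr(σ_κ M)`. Since `R` need not be commutative, the
coefficients can be `2 × 2` matrices themselves, which treats two spins one at a time. -/
noncomputable def spinComponent {R : Type*} [Ring R] [Algebra ℂ R] (κ : Fin 4) :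
    Matrix (Fin 2) (Fin 2) R →ₗ[ℂ] R :=
  Matrix.traceLinearMap (Fin 2) ℂ R ∘ₗ LinearMap.mulLeft ℂ (pauli R κ)

/-- The partial trace `Tr₁((σ_κ ⊗ 1) A)` over a spin coupled to an `n`-dimensional system, encoded
as the single-spin component of `A` regarded as a `2 × 2` matrix of `n × n` blocks. -/
noncomputable def firstSpinComponent {R n : Type*} [Ring R] [Algebra ℂ R] [Fintype n]
    [DecidableEq n] (κ : Fin 4) (A : Matrix (Fin 2 × n) (Fin 2 × n) R) : Matrix n n R :=
  spinComponent κ ((Matrix.compRingEquiv (Fin 2) n R).symm A)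

-- The entries of `P` act as central scalars, so they commute past those of `Q`.
theorem trace_map_kronecker_mul {K S m n : Type*} [CommSemiring K] [Semiring S] [Algebra K S]
    [Fintype m] [Fintype n] [DecidableEq n]
    (P : Matrix m m K) (Q : Matrix n n S) (A : Matrix (m × n) (m × n) S) :
    ((P.map (algebraMap K S) ⊗ₖ Q) * A).trace =
      (Q * (P.map (algebraMap K (Matrix n n S)) * (Matrix.comp m m n n S).symm A).trace).trace := by
  simp only [Matrix.trace, Matrix.diag_apply, Matrix.mul_apply, Matrix.sum_apply,
    Matrix.smul_apply, Matrix.map_apply, Matrix.kroneckerMap_apply, Matrix.comp_symm_apply,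
    Fintype.sum_prod_type, ← Algebra.smul_def, smul_mul_assoc, mul_smul_comm, Finset.mul_sum,
    Finset.smul_sum]
  rw [Finset.sum_comm]

-- Addition in `Fin 3` wraps around, so `(k, k + 1, k + 2)` is always an even permutation.
theorem sum_eps_mul {S : Type*} [NonAssocRing S] (k : Fin 3) (f : Fin 3 → Fin 3 → S) :
    ∑ i, ∑ j, ((eps k i j : ℤ) : S) * f i j = f (k + 1) (k + 2) - f (k + 2) (k + 1) := by
  fin_cases k <;> simp [Fin.sum_univ_three, eps] <;> abel

section

variable {R : Type*} [Ring R] [Algebra ℂ R]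

theorem pauli_map_algebraMap (κ : Fin 4) : (pauli ℂ κ).map (algebraMap ℂ R) = pauli R κ := by
  fin_cases κ <;> ext i j <;> fin_cases i <;> fin_cases j <;> simp [pauli]

theorem trace_pauli_kronecker_pauli_mul (κ μ : Fin 4)
    (A : Matrix (Fin 2 × Fin 2) (Fin 2 × Fin 2) R) :
    ((pauli R κ ⊗ₖ pauli R μ) * A).trace = spinComponent μ (firstSpinComponent κ A) := by
  rw [← pauli_map_algebraMap κ, trace_map_kronecker_mul, pauli_map_algebraMap]
  rfl

theorem spinComponent_apply (κ : Fin 4) (M : Matrix (Fin 2) (Fin 2) R) :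
    spinComponent κ M = ∑ i, ∑ j, pauli R κ i j * M j i := rfl

theorem spinComponent_zero (M : Matrix (Fin 2) (Fin 2) R) :
    spinComponent 0 M = M 0 0 + M 1 1 := by
  simp [spinComponent_apply, pauli]

theorem spinComponent_one (M : Matrix (Fin 2) (Fin 2) R) :
    spinComponent 1 M = M 1 0 + M 0 1 := by
  simp [spinComponent_apply, pauli]

theorem spinComponent_two (M : Matrix (Fin 2) (Fin 2) R) :
    spinComponent 2 M = Complex.I • (M 0 1 - M 1 0) := by
  simp [spinComponent_apply, pauli, Algebra.smul_def, mul_sub, neg_add_eq_sub]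

theorem spinComponent_three (M : Matrix (Fin 2) (Fin 2) R) :
    spinComponent 3 M = M 0 0 - M 1 1 := by
  simp [spinComponent_apply, pauli, sub_eq_add_neg]

theorem spinComponent_succ_mul (k : Fin 3) (M N : Matrix (Fin 2) (Fin 2) R) :
    spinComponent k.succ (M * N) = (1 / 2 : ℂ) •
      (spinComponent 0 M * spinComponent k.succ N + spinComponent k.succ M * spinComponent 0 N
        + Complex.I • (spinComponent (k + 1).succ M * spinComponent (k + 2).succ N
          - spinComponent (k + 2).succ M * spinComponent (k + 1).succ N)) := by
  fin_cases k <;>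
    simp only [Fin.zero_eta, Fin.mk_one, Fin.reduceFinMk, Fin.reduceSucc, Fin.reduceAdd,
      Fin.succ_zero_eq_one, Fin.succ_one_eq_two, zero_add, spinComponent_zero, spinComponent_one,
      spinComponent_two, spinComponent_three, Matrix.mul_apply, Fin.sum_univ_two, mul_add, add_mul,
      mul_sub, sub_mul, smul_mul_assoc, mul_smul_comm, smul_smul, Complex.I_mul_I, smul_sub,
      smul_add] <;>
    match_scalars <;> ring_nf

theorem firstSpinComponent_succ_mul {n : Type*} [Fintype n] [DecidableEq n] (k : Fin 3)
    (A B : Matrix (Fin 2 × n) (Fin 2 × n) R) :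
    firstSpinComponent k.succ (A * B) = (1 / 2 : ℂ) •
      (firstSpinComponent 0 A * firstSpinComponent k.succ B
        + firstSpinComponent k.succ A * firstSpinComponent 0 B
        + Complex.I • (firstSpinComponent (k + 1).succ A * firstSpinComponent (k + 2).succ B
          - firstSpinComponent (k + 2).succ A * firstSpinComponent (k + 1).succ B)) := by
  simp only [firstSpinComponent, map_mul, spinComponent_succ_mul]

end

/-- Entangled dyadic component of the product of two 4×4 matrices over a `ℂ`-algebra,
including the doubly entangled torque term with two Levi-Civita symbols. -/
theorem two_spin_product_dyadic (R : Type*) [Ring R] [Algebra ℂ R]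
    (A B : Matrix (Fin 2 × Fin 2) (Fin 2 × Fin 2) R) (a b : Fin 4 → Fin 4 → R)
    (ha : ∀ κ μ : Fin 4, a κ μ = ((pauli R κ ⊗ₖ pauli R μ) * A).trace)
    (hb : ∀ κ μ : Fin 4, b κ μ = ((pauli R κ ⊗ₖ pauli R μ) * B).trace) :
    ∀ k m : Fin 3,
      ((pauli R k.succ ⊗ₖ pauli R m.succ) * (A * B)).trace =
        (1/4 : ℂ) •
          (a 0 0 * b k.succ m.succ + a k.succ m.succ * b 0 0
            + a k.succ 0 * b 0 m.succ + a 0 m.succ * b k.succ 0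
            + algebraMap ℂ R Complex.I *
                ∑ k₁ : Fin 3, ∑ k₂ : Fin 3,
                  ((eps k k₁ k₂ : ℤ) : R) *
                    (a k₁.succ 0 * b k₂.succ m.succ + a k₁.succ m.succ * b k₂.succ 0)
            + algebraMap ℂ R Complex.I *
                ∑ m₁ : Fin 3, ∑ m₂ : Fin 3,
                  ((eps m m₁ m₂ : ℤ) : R) *
                    (a 0 m₁.succ * b k.succ m₂.succ + a k.succ m₁.succ * b 0 m₂.succ)
            - ∑ k₁ : Fin 3, ∑ k₂ : Fin 3, ∑ m₁ : Fin 3, ∑ m₂ : Fin 3,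
                ((eps k k₁ k₂ : ℤ) : R) * ((eps m m₁ m₂ : ℤ) : R) *
                  (a k₁.succ m₁.succ * b k₂.succ m₂.succ)) := by
  intro k m
  simp only [trace_pauli_kronecker_pauli_mul] at ha hb
  have inner_mul (κ ν : Fin 4) :
      spinComponent m.succ (firstSpinComponent κ A * firstSpinComponent ν B) = (1 / 2 : ℂ) •
        (a κ 0 * b ν m.succ + a κ m.succ * b ν 0 + Complex.I •
          (a κ (m + 1).succ * b ν (m + 2).succ - a κ (m + 2).succ * b ν (m + 1).succ)) := by
    simp only [spinComponent_succ_mul, ha, hb]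
  rw [trace_pauli_kronecker_pauli_mul, firstSpinComponent_succ_mul]
  simp only [map_smul, map_add, map_sub, inner_mul, mul_assoc ((eps _ _ _ : ℤ) : R),
    ← Finset.mul_sum, sum_eps_mul, ← Algebra.smul_def]
  match_scalars <;> grind [Complex.I_sq]
end

section
/- Let A and B be 8×8 matrices with entries in R, with three-spin tensor components a_{κ,λ,μ} and b_{κ,λ,μ}. Then for all k,l,m ∈ {1,2,3}, the fully entangled rank-three tensor component of the commutator satisfies Tr((σ_k ⊗ σ_l ⊗ σ_m) [A,B]) = (1/8)[ [a_{k,l,m}, b_{0,0,0}] + [a_{k,l,0}, b_{0,0,m}] + [a_{k,0,m}, b_{0,l,0}] + [a_{0,l,m}, b_{k,0,0}] + [a_{k,0,0}, b_{0,l,m}] + [a_{0,0,m}, b_{k,l,0}] + [a_{0,l,0}, b_{k,0,m}] + [a_{0,0,0}, b_{k,l,m}] + i ε_{k k₁ k₂}( {a_{k₁,0,0}, b_{k₂,l,m}} + {a_{k₁,l,0}, b_{k₂,0,m}} + {a_{k₁,0,m}, b_{k₂,l,0}} + {a_{k₁,l,m}, b_{k₂,0,0}} ) + i ε_{l l₁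 l₂}( {a_{0,l₁,0}, b_{k,l₂,m}} + {a_{k,l₁,0}, b_{0,l₂,m}} + {a_{0,l₁,m}, b_{k,l₂,0}} + {a_{k,l₁,m}, b_{0,l₂,0}} ) + i ε_{m m₁ m₂}( {a_{0,0,m₁}, b_{k,l,m₂}} + {a_{0,l,m₁}, b_{k,0,m₂}} + {a_{k,0,m₁}, b_{0,l,m₂}} + {a_{k,l,m₁}, b_{0,0,m₂}} ) − ε_{k k₁ k₂} ε_{l l₁ l₂}( [a_{k₁,l₁,0}, b_{k₂,l₂,m}] + [a_{k₁,l₁,m}, b_{k₂,l₂,0}] ) − ε_{k k₁ k₂} ε_{m m₁ m₂}( [a_{k₁,0,m₁}, b_{k₂,l,m₂}] + [a_{k₁,l,m₁}, b_{k₂,0,m₂}] ) − ε_{l l₁ l₂} ε_{m m₁ m₂}( [a_{0,l₁,m₁}, b_{k,l₂,m₂}] + [a_{k,l₁,m₁}, b_{0,l₂,m₂}] ) − i ε_{k k₁ k₂} ε_{l l₁ l₂} ε_{m m₁ m₂} {a_{k₁,l₁,m₁}, b_{k₂,l₂,m₂}} ]; i.e., starting from a commutator, the component terms alternate between commutators and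 anticommutators according to whether the number of Levi-Civita symbols is even or odd. -/
open Matrix Kronecker

/- For a single spin, `Tr(σ_k X Y) = (x_k y_0 + x_0 y_k + i ε_{k k₁ k₂} x_{k₁} y_{k₂}) / 2`, where
the entries of `X` and `Y` need not commute. Taking partial traces applies this rule at one tensor
factor at a time, so the components of `A B` arise from the products `a b` by three operators
`S + i E`, one for each factor, with `E` the cross product term. Reversing the order of
multiplication fixes `S` and negates `E`: in terms of the products `b a`, the components of
`B A` arise by three operators `S - i E`. In the difference, the terms with an even number of `E`
therefore carry the commutators and those with an odd number the anticommutators. -/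

section SiteProduct

variable {M N : Type*} [AddCommGroup M] [Module ℂ M] [AddCommGroup N] [Module ℂ N]

/-- The part of the multiplication rule for the `k`-th Pauli component at one site in which one
factor contributes its scalar component: `f κ κ'` is the contribution of the component `κ` of the
first factor and `κ'` of the second. -/
def siteMixed (k : Fin 3) : (Fin 4 → Fin 4 → M) →ₗ[ℂ] M where
  toFun f := f k.succ 0 + f 0 k.succ
  map_add' _ _ := add_add_add_comm _ _ _ _
  map_smul' c _ := (smul_add c _ _).symm

/-- The part of the multiplication rule for the `k`-th Pauli component at one site that comes from
the cross product of the vector components of the two factors. -/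
def siteCross (k : Fin 3) : (Fin 4 → Fin 4 → M) →ₗ[ℂ] M where
  toFun f := ∑ k₁ : Fin 3, ∑ k₂ : Fin 3, eps k k₁ k₂ • f k₁.succ k₂.succ
  map_add' f g := by simp only [Pi.add_apply, smul_add, Finset.sum_add_distrib]
  map_smul' c f := by
    simp only [Pi.smul_apply, smul_comm _ c, Finset.smul_sum, RingHom.id_apply]

/-- The multiplication rule for the `k`-th Pauli component at one site, with the imaginary unit of
`σ_i σ_j = δ_ij + i ε_ijk σ_k` replaced by a parameter `z`, so that `z = -i` describes
the product in the opposite order. -/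
def siteProduct (z : ℂ) (k : Fin 3) : (Fin 4 → Fin 4 → M) →ₗ[ℂ] M :=
  siteMixed k + z • siteCross k

theorem siteMixed_apply (k : Fin 3) (f : Fin 4 → Fin 4 → M) :
    siteMixed k f = f k.succ 0 + f 0 k.succ := rfl

theorem siteCross_apply (k : Fin 3) (f : Fin 4 → Fin 4 → M) :
    siteCross k f = ∑ k₁ : Fin 3, ∑ k₂ : Fin 3, eps k k₁ k₂ • f k₁.succ k₂.succ := rfl

theorem siteCross_eq_sub (k : Fin 3) (f : Fin 4 → Fin 4 → M) :
    siteCross k f = f (k + 1).succ (k + 2).succ - f (k + 2).succ (k + 1).succ := by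
  rw [siteCross_apply]
  fin_cases k <;> simp [Fin.sum_univ_three, eps, sub_eq_neg_add, add_comm]

theorem siteProduct_apply (z : ℂ) (k : Fin 3) (f : Fin 4 → Fin 4 → M) :
    siteProduct z k f = siteMixed k f + z • siteCross k f := rfl

theorem map_siteProduct (L : M →ₗ[ℂ] N) (z : ℂ) (k : Fin 3) (f : Fin 4 → Fin 4 → M) :
    L (siteProduct z k f) = siteProduct z k fun κ κ' => L (f κ κ') := by
  simp only [siteProduct_apply, siteMixed_apply, siteCross_apply, map_add, map_smul, map_sum,
    map_zsmul]

theorem siteProduct_pi (z : ℂ) (k : Fin 3) (f : Fin 4 → Fin 4 → Fin 4 → Fin 4 → M) :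
    siteProduct z k f = fun μ μ' => siteProduct z k fun κ κ' => f κ κ' μ μ' := by
  funext μ μ'
  exact map_siteProduct (LinearMap.proj μ' ∘ₗ LinearMap.proj μ) z k f

theorem siteProduct_comm (z w : ℂ) (k l : Fin 3) (f : Fin 4 → Fin 4 → Fin 4 → Fin 4 → M) :
    (siteProduct z k fun κ κ' => siteProduct w l fun μ μ' => f κ κ' μ μ') =
      siteProduct w l fun μ μ' => siteProduct z k fun κ κ' => f κ κ' μ μ' := by
  rw [← map_siteProduct (siteProduct w l) z k f, siteProduct_pi]

theorem eps_swap (i j k : Fin 3) : eps i k j = -eps i j k := by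
  decide +revert

theorem siteProduct_neg (z : ℂ) (k : Fin 3) (f : Fin 4 → Fin 4 → M) :
    siteProduct (-z) k f = siteProduct z k fun κ κ' => f κ' κ := by
  have cross_swap : (siteCross k fun κ κ' => f κ' κ) = -siteCross k f := by
    rw [siteCross_apply, siteCross_apply, Finset.sum_comm]
    simp only [← Finset.sum_neg_distrib, ← neg_smul, ← eps_swap k]
  rw [siteProduct_apply, siteProduct_apply, cross_swap, siteMixed_apply, siteMixed_apply,
    add_comm (f _ _), neg_smul, smul_neg]

theorem siteProduct_three (z : ℂ) (k l m : Fin 3)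
    (f : Fin 4 → Fin 4 → Fin 4 → Fin 4 → Fin 4 → Fin 4 → M) :
    siteProduct z k (siteProduct z l (siteProduct z m f)) =
      siteMixed k (siteMixed l (siteMixed m f)) +
        z • (siteCross k (siteMixed l (siteMixed m f)) + siteMixed k (siteCross l (siteMixed m f)) +
          siteMixed k (siteMixed l (siteCross m f))) +
        z ^ 2 • (siteCross k (siteCross l (siteMixed m f)) +
          siteCross k (siteMixed l (siteCross m f)) + siteMixed k (siteCross l (siteCross m f))) +
        z ^ 3 • siteCross k (siteCross l (siteCross m f)) := by
  simp only [siteProduct_apply, map_add, map_smul]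
  module

theorem siteProduct_I_three_sub_siteProduct_neg_I_three (k l m : Fin 3)
    (f g : Fin 4 → Fin 4 → Fin 4 → Fin 4 → Fin 4 → Fin 4 → M) :
    siteProduct Complex.I k (siteProduct Complex.I l (siteProduct Complex.I m f)) -
        siteProduct (-Complex.I) k (siteProduct (-Complex.I) l (siteProduct (-Complex.I) m g)) =
      siteMixed k (siteMixed l (siteMixed m (f - g))) +
        Complex.I • (siteCross k (siteMixed l (siteMixed m (f + g))) +
          siteMixed k (siteCross l (siteMixed m (f + g))) +
          siteMixed k (siteMixed l (siteCross m (f + g)))) -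
        (siteCross k (siteCross l (siteMixed m (f - g))) +
          siteCross k (siteMixed l (siteCross m (f - g))) +
          siteMixed k (siteCross l (siteCross m (f - g)))) -
        Complex.I • siteCross k (siteCross l (siteCross m (f + g))) := by
  have neg_I_cubed : (-Complex.I) ^ 3 = Complex.I := by
    rw [Odd.neg_pow (by decide), Complex.I_pow_three, neg_neg]
  simp only [siteProduct_three, neg_sq, Complex.I_sq, Complex.I_pow_three, neg_I_cubed, map_add,
    LinearMap.map_sub]
  module

end SiteProduct

section PartialTrace

variable {ι n S : Type*} [Fintype n]

/-- The partial trace over the last tensor factor against a matrix `P` on that factor: it sends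
`X ⊗ Y` to `Tr(P Y) X` over a commutative ring. -/
def partialTrace [NonUnitalNonAssocSemiring S] (P : Matrix n n S)
    (A : Matrix (ι × n) (ι × n) S) : Matrix ι ι S :=
  ((comp ι ι n n S).symm A).map fun block => (P * block).trace

theorem trace_kronecker_mul [Fintype ι] [NonUnitalSemiring S] (X : Matrix ι ι S) (P : Matrix n n S)
    (A : Matrix (ι × n) (ι × n) S) :
    ((X ⊗ₖ P) * A).trace = (X * partialTrace P A).trace := by
  simp only [Matrix.trace, diag_apply, mul_apply, kroneckerMap_apply, partialTrace, map_apply,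
    comp_symm_apply, Fintype.sum_prod_type, Finset.mul_sum, mul_assoc]
  exact Finset.sum_congr rfl fun x _ => Finset.sum_comm

end PartialTrace

section PauliComponents

variable {R ι : Type*} [Ring R] [Algebra ℂ R] [Fintype ι]

theorem trace_pauli_mul (κ : Fin 4) (A : Matrix (Fin 2) (Fin 2) R) :
    (pauli R κ * A).trace =
      ![A 0 0 + A 1 1, A 0 1 + A 1 0, Complex.I • (A 0 1 - A 1 0), A 0 0 - A 1 1] κ := by
  simp only [trace_fin_two, mul_apply, Fin.sum_univ_two]
  fin_cases κ <;> simp [pauli, ← Algebra.smul_def, smul_sub] <;> abel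

theorem trace_pauli_mul_mul (k : Fin 3) (A B : Matrix (Fin 2) (Fin 2) R) :
    (pauli R k.succ * (A * B)).trace =
      (1 / 2 : ℂ) • siteProduct Complex.I k fun κ κ' =>
        (pauli R κ * A).trace * (pauli R κ' * B).trace := by
  simp only [trace_pauli_mul, siteProduct_apply, siteMixed_apply, siteCross_eq_sub, mul_apply,
    Fin.sum_univ_two]
  fin_cases k <;>
    simp only [Fin.zero_eta, Fin.mk_one, Fin.reduceFinMk, Fin.reduceAdd, Fin.reduceSucc, cons_val,
      mul_add, add_mul, mul_sub, sub_mul, smul_mul_assoc, mul_smul_comm, smul_add, smul_sub,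
      smul_smul, Complex.I_mul_I] <;>
    module

theorem partialTrace_pauli_mul (m : Fin 3) (A B : Matrix (ι × Fin 2) (ι × Fin 2) R) :
    partialTrace (pauli R m.succ) (A * B) =
      (1 / 2 : ℂ) • siteProduct Complex.I m fun μ μ' =>
        partialTrace (pauli R μ) A * partialTrace (pauli R μ') B := by
  ext x y
  set A' := (comp ι ι (Fin 2) (Fin 2) R).symm A
  set B' := (comp ι ι (Fin 2) (Fin 2) R).symm B
  have block_mul : (comp ι ι (Fin 2) (Fin 2) R).symm (A * B) x y = ∑ z, A' x z * B' z y :=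
    congrFun₂ (map_mul (compRingEquiv ι (Fin 2) R).symm A B) x y
  calc partialTrace (pauli R m.succ) (A * B) x y
      = ∑ z, (pauli R m.succ * (A' x z * B' z y)).trace := by
        rw [partialTrace, map_apply, block_mul, Finset.mul_sum, trace_sum]
    _ = (1 / 2 : ℂ) • siteProduct Complex.I m fun μ μ' =>
          ∑ z, (pauli R μ * A' x z).trace * (pauli R μ' * B' z y).trace := by
        simp only [trace_pauli_mul_mul, ← Finset.smul_sum, ← map_sum, Finset.sum_fn]
    _ = ((1 / 2 : ℂ) • siteProduct Complex.I m fun μ μ' =>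
          partialTrace (pauli R μ) A * partialTrace (pauli R μ') B) x y :=
        congrArg ((1 / 2 : ℂ) • ·) (map_siteProduct (entryLinearMap ℂ R x y) Complex.I m
          fun μ μ' => partialTrace (pauli R μ) A * partialTrace (pauli R μ') B).symm

theorem trace_kronecker_pauli_mul (X : Matrix ι ι R) (m : Fin 3)
    (A B : Matrix (ι × Fin 2) (ι × Fin 2) R) :
    ((X ⊗ₖ pauli R m.succ) * (A * B)).trace =
      (1 / 2 : ℂ) • siteProduct Complex.I m fun μ μ' =>
        (X * (partialTrace (pauli R μ) A * partialTrace (pauli R μ') B)).trace := by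
  rw [trace_kronecker_mul, partialTrace_pauli_mul, mul_smul_comm, trace_smul]
  exact congrArg _ (map_siteProduct (traceLinearMap ι ℂ R ∘ₗ LinearMap.mulLeft ℂ X) _ _ _)

/-- The three-spin tensor component `a_{κ,μ,ν}` of an `8 × 8` matrix, the first tensor factor being
indexed by `κ`. -/
noncomputable def pauliTensor (A : Matrix ((Fin 2 × Fin 2) × Fin 2) ((Fin 2 × Fin 2) × Fin 2) R)
    (κ μ ν : Fin 4) : R :=
  ((pauli R κ ⊗ₖ pauli R μ ⊗ₖ pauli R ν) * A).trace

-- The innermost `siteProduct m` consumes the first two arguments, hence the order `ν ν' μ μ' κ κ'`.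
theorem pauliTensor_mul (k l m : Fin 3)
    (A B : Matrix ((Fin 2 × Fin 2) × Fin 2) ((Fin 2 × Fin 2) × Fin 2) R) :
    pauliTensor (A * B) k.succ l.succ m.succ =
      (1 / 8 : ℂ) •
        siteProduct Complex.I k (siteProduct Complex.I l (siteProduct Complex.I m
          fun ν ν' μ μ' κ κ' => pauliTensor A κ μ ν * pauliTensor B κ' μ' ν')) := by
  have siteProduct_smul (c : ℂ) (j : Fin 3) (f : Fin 4 → Fin 4 → R) :
      (siteProduct Complex.I j fun κ κ' => c • f κ κ') = c • siteProduct Complex.I j f :=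
    map_smul _ c f
  simp only [pauliTensor, trace_kronecker_pauli_mul, trace_pauli_mul_mul, ← trace_kronecker_mul,
    siteProduct_smul, siteProduct_pi, smul_smul]
  simp only [siteProduct_comm _ _ m l, siteProduct_comm _ _ m k, siteProduct_comm _ _ l k]
  norm_num

theorem pauliTensor_mul_swap (k l m : Fin 3)
    (A B : Matrix ((Fin 2 × Fin 2) × Fin 2) ((Fin 2 × Fin 2) × Fin 2) R) :
    pauliTensor (B * A) k.succ l.succ m.succ =
      (1 / 8 : ℂ) •
        siteProduct (-Complex.I) k (siteProduct (-Complex.I) l (siteProduct (-Complex.I) m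
          fun ν ν' μ μ' κ κ' => pauliTensor B κ' μ' ν' * pauliTensor A κ μ ν)) := by
  simpa only [siteProduct_pi, siteProduct_neg _ k, siteProduct_neg _ l, siteProduct_neg _ m]
    using pauliTensor_mul k l m B A

theorem pauliTensor_sub (A B : Matrix ((Fin 2 × Fin 2) × Fin 2) ((Fin 2 × Fin 2) × Fin 2) R)
    (κ μ ν : Fin 4) :
    pauliTensor (A - B) κ μ ν = pauliTensor A κ μ ν - pauliTensor B κ μ ν := by
  simp only [pauliTensor, mul_sub, trace_sub]

end PauliComponents

/-- Fully entangled rank-three tensor component of the commutator of two 8×8 matrices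
over a `ℂ`-algebra: starting from a commutator, the component terms alternate between
commutators and anticommutators according to the parity of the number of
Levi-Civita symbols. Here `[x,y] = xy - yx` and `{x,y} = xy + yx`. -/
theorem three_spin_commutator_tensor (R : Type*) [Ring R] [Algebra ℂ R]
    (A B : Matrix ((Fin 2 × Fin 2) × Fin 2) ((Fin 2 × Fin 2) × Fin 2) R)
    (a b : Fin 4 → Fin 4 → Fin 4 → R)
    (ha : ∀ κ μ ν : Fin 4,
      a κ μ ν = ((pauli R κ ⊗ₖ pauli R μ ⊗ₖ pauli R ν) * A).trace)
    (hb : ∀ κ μ ν : Fin 4,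
      b κ μ ν = ((pauli R κ ⊗ₖ pauli R μ ⊗ₖ pauli R ν) * B).trace) :
    ∀ k l m : Fin 3,
      ((pauli R k.succ ⊗ₖ pauli R l.succ ⊗ₖ pauli R m.succ) * (A * B - B * A)).trace =
        (1/8 : ℂ) •
          ((a k.succ l.succ m.succ * b 0 0 0 - b 0 0 0 * a k.succ l.succ m.succ)
            + (a k.succ l.succ 0 * b 0 0 m.succ - b 0 0 m.succ * a k.succ l.succ 0)
            + (a k.succ 0 m.succ * b 0 l.succ 0 - b 0 l.succ 0 * a k.succ 0 m.succ)
            + (a 0 l.succ m.succ * b k.succ 0 0 - b k.succ 0 0 * a 0 l.succ m.succ)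
            + (a k.succ 0 0 * b 0 l.succ m.succ - b 0 l.succ m.succ * a k.succ 0 0)
            + (a 0 0 m.succ * b k.succ l.succ 0 - b k.succ l.succ 0 * a 0 0 m.succ)
            + (a 0 l.succ 0 * b k.succ 0 m.succ - b k.succ 0 m.succ * a 0 l.succ 0)
            + (a 0 0 0 * b k.succ l.succ m.succ - b k.succ l.succ m.succ * a 0 0 0)
            + algebraMap ℂ R Complex.I *
                ∑ k₁ : Fin 3, ∑ k₂ : Fin 3,
                  ((eps k k₁ k₂ : ℤ) : R) *
                    ((a k₁.succ 0 0 * b k₂.succ l.succ m.succ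
                        + b k₂.succ l.succ m.succ * a k₁.succ 0 0)
                      + (a k₁.succ l.succ 0 * b k₂.succ 0 m.succ
                        + b k₂.succ 0 m.succ * a k₁.succ l.succ 0)
                      + (a k₁.succ 0 m.succ * b k₂.succ l.succ 0
                        + b k₂.succ l.succ 0 * a k₁.succ 0 m.succ)
                      + (a k₁.succ l.succ m.succ * b k₂.succ 0 0
                        + b k₂.succ 0 0 * a k₁.succ l.succ m.succ))
            + algebraMap ℂ R Complex.I *
                ∑ l₁ : Fin 3, ∑ l₂ : Fin 3,
                  ((eps l l₁ l₂ : ℤ) : R) *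
                    ((a 0 l₁.succ 0 * b k.succ l₂.succ m.succ
                        + b k.succ l₂.succ m.succ * a 0 l₁.succ 0)
                      + (a k.succ l₁.succ 0 * b 0 l₂.succ m.succ
                        + b 0 l₂.succ m.succ * a k.succ l₁.succ 0)
                      + (a 0 l₁.succ m.succ * b k.succ l₂.succ 0
                        + b k.succ l₂.succ 0 * a 0 l₁.succ m.succ)
                      + (a k.succ l₁.succ m.succ * b 0 l₂.succ 0
                        + b 0 l₂.succ 0 * a k.succ l₁.succ m.succ))
            + algebraMap ℂ R Complex.I *
                ∑ m₁ : Fin 3, ∑ m₂ : Fin 3,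
                  ((eps m m₁ m₂ : ℤ) : R) *
                    ((a 0 0 m₁.succ * b k.succ l.succ m₂.succ
                        + b k.succ l.succ m₂.succ * a 0 0 m₁.succ)
                      + (a 0 l.succ m₁.succ * b k.succ 0 m₂.succ
                        + b k.succ 0 m₂.succ * a 0 l.succ m₁.succ)
                      + (a k.succ 0 m₁.succ * b 0 l.succ m₂.succ
                        + b 0 l.succ m₂.succ * a k.succ 0 m₁.succ)
                      + (a k.succ l.succ m₁.succ * b 0 0 m₂.succ
                        + b 0 0 m₂.succ * a k.succ l.succ m₁.succ))
            - ∑ k₁ : Fin 3, ∑ k₂ : Fin 3, ∑ l₁ : Fin 3, ∑ l₂ : Fin 3,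
                ((eps k k₁ k₂ : ℤ) : R) * ((eps l l₁ l₂ : ℤ) : R) *
                  ((a k₁.succ l₁.succ 0 * b k₂.succ l₂.succ m.succ
                      - b k₂.succ l₂.succ m.succ * a k₁.succ l₁.succ 0)
                    + (a k₁.succ l₁.succ m.succ * b k₂.succ l₂.succ 0
                      - b k₂.succ l₂.succ 0 * a k₁.succ l₁.succ m.succ))
            - ∑ k₁ : Fin 3, ∑ k₂ : Fin 3, ∑ m₁ : Fin 3, ∑ m₂ : Fin 3,
                ((eps k k₁ k₂ : ℤ) : R) * ((eps m m₁ m₂ : ℤ) : R) *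
                  ((a k₁.succ 0 m₁.succ * b k₂.succ l.succ m₂.succ
                      - b k₂.succ l.succ m₂.succ * a k₁.succ 0 m₁.succ)
                    + (a k₁.succ l.succ m₁.succ * b k₂.succ 0 m₂.succ
                      - b k₂.succ 0 m₂.succ * a k₁.succ l.succ m₁.succ))
            - ∑ l₁ : Fin 3, ∑ l₂ : Fin 3, ∑ m₁ : Fin 3, ∑ m₂ : Fin 3,
                ((eps l l₁ l₂ : ℤ) : R) * ((eps m m₁ m₂ : ℤ) : R) *
                  ((a 0 l₁.succ m₁.succ * b k.succ l₂.succ m₂.succ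
                      - b k.succ l₂.succ m₂.succ * a 0 l₁.succ m₁.succ)
                    + (a k.succ l₁.succ m₁.succ * b 0 l₂.succ m₂.succ
                      - b 0 l₂.succ m₂.succ * a k.succ l₁.succ m₁.succ))
            - algebraMap ℂ R Complex.I *
                ∑ k₁ : Fin 3, ∑ k₂ : Fin 3, ∑ l₁ : Fin 3, ∑ l₂ : Fin 3,
                  ∑ m₁ : Fin 3, ∑ m₂ : Fin 3,
                    ((eps k k₁ k₂ : ℤ) : R) * ((eps l l₁ l₂ : ℤ) : R)
                      * ((eps m m₁ m₂ : ℤ) : R) *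
                      (a k₁.succ l₁.succ m₁.succ * b k₂.succ l₂.succ m₂.succ
                        + b k₂.succ l₂.succ m₂.succ * a k₁.succ l₁.succ m₁.succ)) := by
  intro k l m
  have tensor_A : pauliTensor A = a := by funext κ μ ν; exact (ha κ μ ν).symm
  have tensor_B : pauliTensor B = b := by funext κ μ ν; exact (hb κ μ ν).symm
  change pauliTensor (A * B - B * A) k.succ l.succ m.succ = _
  rw [pauliTensor_sub, pauliTensor_mul, pauliTensor_mul_swap, ← smul_sub,
    siteProduct_I_three_sub_siteProduct_neg_I_three, tensor_A, tensor_B]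
  congr 1
  simp only [siteMixed_apply, siteCross_apply, Pi.add_apply, Pi.sub_apply, Pi.smul_apply,
    Finset.sum_apply, ← Algebra.smul_def, ← zsmul_eq_mul, smul_mul_assoc, smul_add,
    Finset.smul_sum, Finset.sum_add_distrib]
  abel
end

section
/- Let A and B be 8×8 matrices with entries in R, with three-spin tensor components a_{κ,λ,μ} and b_{κ,λ,μ}. Then the total scalar component of the commutator satisfies Tr([A,B]) = (1/8) Σ_{κ,λ,μ=0}^{3} [a_{κ,λ,μ}, b_{κ,λ,μ}]. -/
/-!
The Pauli matrices satisfy `∑ κ, (σ_κ)ᵢⱼ (σ_κ)ₖₗ = 2 δᵢₗ δⱼₖ`, and identities of this shape multiply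
under Kronecker products, so three-spin tensors satisfy one with constant `8`. Such an identity
recovers a matrix from its components, `c A = ∑ κ, Tr(P_κ A) P_κ`, even over a noncommutative
algebra, because the entries of `P_κ` are central. Multiplying by `B` on the right and taking the
trace gives `c Tr(A B) = ∑ κ, Tr(P_κ A) Tr(P_κ B)`, which is then antisymmetrised in `A` and `B`.
-/

open Matrix Kronecker

theorem map_kronecker {l m n p R S F : Type*} [Mul R] [Mul S] [FunLike F R S]
    [MulHomClass F R S] (f : F) (A : Matrix l m R) (B : Matrix n p R) :
    (A ⊗ₖ B).map f = A.map f ⊗ₖ B.map f := by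
  ext ⟨i, i'⟩ ⟨j, j'⟩
  exact map_mul f (A i j) (B i' j')

section Fierz

variable {ι ι' m n S R : Type*} [Fintype ι] [Fintype ι'] [DecidableEq m] [DecidableEq n]

/-- The Fierz completeness relation, with constant `c`, for a finite family of square matrices.
As a statement about `n × n × n × n` tensors it says that `∑ κ, P κ ⊗ₖ P κ` is `c` times the swap of
the two tensor factors; it is written in entries because this is how it is checked and used. -/
def IsFierzComplete [Semiring S] (P : ι → Matrix n n S) (c : S) : Prop :=
  ∀ i j k l, ∑ κ, P κ i j * P κ k l = if i = l ∧ j = k then c else 0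

namespace IsFierzComplete

variable [CommSemiring S]

theorem kronecker {P : ι → Matrix m m S} {Q : ι' → Matrix n n S} {c d : S}
    (hP : IsFierzComplete P c) (hQ : IsFierzComplete Q d) :
    IsFierzComplete (fun x : ι × ι' ↦ P x.1 ⊗ₖ Q x.2) (c * d) := by
  rintro ⟨i, i'⟩ ⟨j, j'⟩ ⟨k, k'⟩ ⟨l, l'⟩
  calc ∑ x : ι × ι', P x.1 i j * Q x.2 i' j' * (P x.1 k l * Q x.2 k' l')
      = (∑ κ, P κ i j * P κ k l) * ∑ κ, Q κ i' j' * Q κ k' l' := by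
        simp only [Fintype.sum_mul_sum, Fintype.sum_prod_type, mul_mul_mul_comm]
    _ = if (i, i') = (l, l') ∧ (j, j') = (k, k') then c * d else 0 := by
        simp only [hP i j k l, hQ i' j' k' l', ite_zero_mul_ite_zero, Prod.mk_inj, and_and_and_comm]

variable [Fintype n] {P : ι → Matrix n n S} {c : S}

theorem sum_trace_smul [Semiring R] [Algebra S R] (hP : IsFierzComplete P c) (A : Matrix n n R) :
    ∑ κ, ((P κ).map (algebraMap S R) * A).trace • (P κ).map (algebraMap S R) = c • A := by
  ext k l
  calc (∑ κ, ((P κ).map (algebraMap S R) * A).trace • (P κ).map (algebraMap S R)) k l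
      = ∑ κ, ∑ i, ∑ j, (P κ k l * P κ i j) • A j i := by
        simp only [Matrix.sum_apply, Matrix.smul_apply, smul_eq_mul, map_apply,
          ← Algebra.commutes, ← Algebra.smul_def, trace, diag_apply, mul_apply,
          Finset.smul_sum, smul_smul]
    _ = ∑ i, ∑ j, (∑ κ, P κ k l * P κ i j) • A j i := by
        simp only [Finset.sum_smul]
        rw [Finset.sum_comm]
        exact Finset.sum_congr rfl fun i _ ↦ Finset.sum_comm
    _ = c • A k l := by
        simp only [hP k l, ite_and, ite_smul, zero_smul, Finset.sum_ite_eq, Finset.mem_univ,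
          if_true]

theorem sum_trace_mul_trace [Semiring R] [Algebra S R] (hP : IsFierzComplete P c)
    (A B : Matrix n n R) :
    ∑ κ, ((P κ).map (algebraMap S R) * A).trace * ((P κ).map (algebraMap S R) * B).trace =
      c • (A * B).trace := by
  calc ∑ κ, ((P κ).map (algebraMap S R) * A).trace * ((P κ).map (algebraMap S R) * B).trace
      = ((∑ κ, ((P κ).map (algebraMap S R) * A).trace • (P κ).map (algebraMap S R)) * B).trace := by
        simp only [Matrix.sum_mul, Matrix.smul_mul, trace_sum, trace_smul, smul_eq_mul]
    _ = c • (A * B).trace := by rw [hP.sum_trace_smul, Matrix.smul_mul, trace_smul]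

theorem sum_commutator_trace [Ring R] [Algebra S R] (hP : IsFierzComplete P c)
    (A B : Matrix n n R) :
    ∑ κ, (((P κ).map (algebraMap S R) * A).trace * ((P κ).map (algebraMap S R) * B).trace -
        ((P κ).map (algebraMap S R) * B).trace * ((P κ).map (algebraMap S R) * A).trace) =
      c • (A * B - B * A).trace := by
  rw [Finset.sum_sub_distrib, hP.sum_trace_mul_trace, hP.sum_trace_mul_trace, trace_sub, smul_sub]

end IsFierzComplete

end Fierz

theorem isFierzComplete_pauli : IsFierzComplete (pauli ℂ) 2 := by
  intro i j k l
  fin_cases i <;> fin_cases j <;> fin_cases k <;> fin_cases l <;>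
    simp [pauli, Fin.sum_univ_four, one_add_one_eq_two]

theorem isFierzComplete_pauli_kronecker_three :
    IsFierzComplete (fun x : (Fin 4 × Fin 4) × Fin 4 ↦
      pauli ℂ x.1.1 ⊗ₖ pauli ℂ x.1.2 ⊗ₖ pauli ℂ x.2) 8 := by
  rw [show (8 : ℂ) = 2 * 2 * 2 by norm_num]
  exact (isFierzComplete_pauli.kronecker isFierzComplete_pauli).kronecker isFierzComplete_pauli

/-- Total scalar component of the commutator of two 8×8 matrices over a `ℂ`-algebra:
`Tr([A,B]) = (1/8) Σ_{κ,λ,μ} [a_{κ,λ,μ}, b_{κ,λ,μ}]` with `[x,y] = xy - yx`. -/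
theorem three_spin_commutator_scalar (R : Type*) [Ring R] [Algebra ℂ R]
    (A B : Matrix ((Fin 2 × Fin 2) × Fin 2) ((Fin 2 × Fin 2) × Fin 2) R)
    (a b : Fin 4 → Fin 4 → Fin 4 → R)
    (ha : ∀ κ μ ν : Fin 4,
      a κ μ ν = ((pauli R κ ⊗ₖ pauli R μ ⊗ₖ pauli R ν) * A).trace)
    (hb : ∀ κ μ ν : Fin 4,
      b κ μ ν = ((pauli R κ ⊗ₖ pauli R μ ⊗ₖ pauli R ν) * B).trace) :
    (A * B - B * A).trace =
      (1/8 : ℂ) •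
        ∑ κ : Fin 4, ∑ μ : Fin 4, ∑ ν : Fin 4,
          (a κ μ ν * b κ μ ν - b κ μ ν * a κ μ ν) := by
  have sum_commutator := isFierzComplete_pauli_kronecker_three.sum_commutator_trace A B
  simp only [map_kronecker, map_algebraMap_pauli, Fintype.sum_prod_type, ← ha, ← hb]
    at sum_commutator
  rw [sum_commutator, smul_smul]
  norm_num
end
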